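/- Let f : ℝⁿ → ℝⁿ be continuously differentiable, let M be a symmetric positive definite real n×n matrix with M ≼ I, let β > 0, ℓ > 0, ρ_max ≥ 0, and let ω : ℝ → ℝⁿ satisfy ‖ω(t)‖ ≤ ρ_max for all t ≥ 0. Let x, x̄ : [0,∞) → ℝⁿ be differentiable with x′(t) = f(x(t)) + ω(t), x̄′(t) = f(x̄(t)), and x(0) = x̄(0). Assume that for all t ≥ 0, ‖x(t) − x̄(t)‖_M ≤ ℓ and (Df(v))ᵀ M + M (Df(v)) ≼ −2βM for every v on the segment joining x(t) and x̄(t). Then the deviation is uniformly ultimately bounded: ‖x(t) − x̄(t)‖²_M ≤ 2 ℓ ρ_max / β for all t ≥ 0. -/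

import Mathlib

open Matrix

/-- The M-norm of a vector: `‖v‖_M = √(vᵀ M v)`. -/
noncomputable def mnorm {n : ℕ} (M : Matrix (Fin n) (Fin n) ℝ) (v : Fin n → ℝ) : ℝ :=
  Real.sqrt (v ⬝ᵥ M.mulVec v)

/-- The Jacobian of `f` at `z`, as a matrix. -/
noncomputable def jac {n : ℕ} (f : (Fin n → ℝ) → (Fin n → ℝ)) (z : Fin n → ℝ) :
    Matrix (Fin n) (Fin n) ℝ :=
  LinearMap.toMatrix' (fderiv ℝ f z : (Fin n → ℝ) →ₗ[ℝ] (Fin n → ℝ))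

/-- Loewner order: `A ≼ B` iff `B - A` is positive semidefinite. -/
def loewnerLE {n : ℕ} (A B : Matrix (Fin n) (Fin n) ℝ) : Prop := (B - A).PosSemidef

/-!
Write `e = x - x̄` and `V = ‖e‖_M²`. By the mean value theorem on the segment from `x̄` to `x`, the
contraction inequality integrates to `eᵀ M (f x - f x̄) ≤ -β V`. Together with Young's inequality
`2 eᵀ M ω ≤ β V + ‖ω‖_M² / β` this gives `V' ≤ -β V + ρ² / β`, so Grönwall's inequality yields
`‖e‖_M ≤ ρ / β`. Multiplying by `‖e‖_M ≤ ℓ` gives `‖e‖_M² ≤ ℓ ρ / β`, half of the claimed bound.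
-/

theorem gronwallBound_zero_neg_le {β ε : ℝ} (hβ : 0 < β) (hε : 0 ≤ ε) (t : ℝ) :
    gronwallBound 0 (-β) ε t ≤ ε / β := by
  have hdecay : 0 ≤ ε / β * Real.exp (-β * t) := by positivity
  rw [gronwallBound_of_K_ne_0 (neg_ne_zero.2 hβ.ne'), div_neg]
  linarith

theorem two_mul_apply_le_mul_add_div {K V : Type*} [Field K] [LinearOrder K]
    [IsStrictOrderedRing K] [AddCommGroup V] [Module K V] {B : LinearMap.BilinForm K V}
    (hB : B.IsPosSemidef) {β : K} (hβ : 0 < β) (u v : V) :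
    2 * B u v ≤ β * B u u + B v v / β := by
  have hsymm : B v u = B u v := hB.isSymm.eq v u
  have hnonneg : 0 ≤ B (β • u - v) (β • u - v) := hB.isNonneg.nonneg _
  have hexpand : B (β • u - v) (β • u - v) = β * (β * B u u + B v v / β - 2 * B u v) := by
    simp only [map_sub, map_smul, LinearMap.sub_apply, LinearMap.smul_apply, smul_eq_mul, hsymm]
    field_simp
    ring
  rw [hexpand] at hnonneg
  exact sub_nonneg.1 (nonneg_of_mul_nonneg_right hnonneg hβ)

section NormedSpace

variable {E F : Type*} [NormedAddCommGroup E] [NormedSpace ℝ E]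
  [NormedAddCommGroup F] [NormedSpace ℝ F]

theorem strongDual_image_sub_le_of_fderiv_le {f : E → F} {f' : E → E →L[ℝ] F}
    (φ : StrongDual ℝ F) {a b : E} {C : ℝ}
    (hf : ∀ z ∈ segment ℝ a b, HasFDerivWithinAt f (f' z) (segment ℝ a b) z)
    (hC : ∀ z ∈ segment ℝ a b, φ (f' z (a - b)) ≤ C) :
    φ (f a - f b) ≤ C := by
  obtain ⟨z, hz, hmean⟩ := domain_mvt
    (fun z hz => φ.hasFDerivAt.comp_hasFDerivWithinAt z (hf z hz))
    (convex_segment a b) (right_mem_segment ℝ a b) (left_mem_segment ℝ a b)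
  rw [segment_symm] at hz
  calc φ (f a - f b)
      = φ (f' z (a - b)) := by
        simpa only [Function.comp_apply, ContinuousLinearMap.comp_apply, map_sub] using hmean
    _ ≤ C := hC z hz

theorem apply_self_le_gronwallBound_of_dissipative {B : E →L[ℝ] E →L[ℝ] ℝ}
    (hB : B.toBilinForm.IsPosSemidef) {β κ : ℝ} (hβ : 0 < β) {e g w : ℝ → E}
    (he : ∀ t, 0 ≤ t → HasDerivWithinAt e (g t + w t) (Set.Ici 0) t)
    (hg : ∀ t, 0 ≤ t → B (e t) (g t) ≤ -β * B (e t) (e t))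
    (hw : ∀ t, 0 ≤ t → B (w t) (w t) ≤ κ) {t : ℝ} (ht : 0 ≤ t) :
    B (e t) (e t) ≤ gronwallBound (B (e 0) (e 0)) (-β) (κ / β) t := by
  have hderiv : ∀ s, 0 ≤ s → HasDerivWithinAt (fun s => B (e s) (e s))
      (2 * B (e s) (g s + w s)) (Set.Ici 0) s := fun s hs => by
    have hsymm : B (g s + w s) (e s) = B (e s) (g s + w s) := hB.isSymm.eq _ _
    simpa only [hsymm, ← two_mul] using B.hasDerivWithinAt_of_bilinear (he s hs) (he s hs)
  have hbound : ∀ s, 0 ≤ s → 2 * B (e s) (g s + w s) ≤ -β * B (e s) (e s) + κ / β := fun s hs => by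
    have hyoung : 2 * B (e s) (w s) ≤ β * B (e s) (e s) + B (w s) (w s) / β :=
      two_mul_apply_le_mul_add_div hB hβ (e s) (w s)
    have hdist : B (w s) (w s) / β ≤ κ / β := by gcongr; exact hw s hs
    rw [map_add]
    linarith [hg s hs]
  simpa only [sub_zero] using le_gronwallBound_of_liminf_deriv_right_le
    (fun s hs => (hderiv s hs.1).continuousWithinAt.mono Set.Icc_subset_Ici_self)
    (fun s hs _ hr =>
      ((hderiv s hs.1).mono (Set.Ici_subset_Ici.2 hs.1)).liminf_right_slope_le hr)
    le_rfl (fun s hs => hbound s hs.1) t ⟨ht, le_rfl⟩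

end NormedSpace

section MatrixForm

variable {n : ℕ} {M : Matrix (Fin n) (Fin n) ℝ}

/-- The bilinear form `(u, v) ↦ uᵀ M v` of a matrix, as a continuous bilinear map, so that the
calculus of bilinear maps on normed spaces applies to the square of the `M`-norm. -/
noncomputable def continuousBilin (M : Matrix (Fin n) (Fin n) ℝ) :
    (Fin n → ℝ) →L[ℝ] (Fin n → ℝ) →L[ℝ] ℝ :=
  (toBilin' M).toContinuousBilinearMap

theorem continuousBilin_apply (u v : Fin n → ℝ) : continuousBilin M u v = u ⬝ᵥ M *ᵥ v :=
  toBilin'_apply' M u v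

theorem isPosSemidef_continuousBilin (hM : M.PosSemidef) :
    (continuousBilin M).toBilinForm.IsPosSemidef where
  eq := (isSymm_toBilin'_iff_isSymm.2 (isHermitian_iff_isSymm.1 hM.isHermitian)).eq
  nonneg v := (hM.dotProduct_mulVec_nonneg v).trans_eq (continuousBilin_apply v v).symm

theorem sq_mnorm (hM : M.PosSemidef) (v : Fin n → ℝ) :
    mnorm M v ^ 2 = continuousBilin M v v := by
  rw [continuousBilin_apply]
  exact Real.sq_sqrt (hM.dotProduct_mulVec_nonneg v)

theorem mnorm_le_sqrt_dotProduct_self (hM : loewnerLE M 1) (v : Fin n → ℝ) :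
    mnorm M v ≤ √(v ⬝ᵥ v) := by
  have hdiff : 0 ≤ v ⬝ᵥ (1 - M) *ᵥ v := hM.dotProduct_mulVec_nonneg v
  rw [sub_mulVec, one_mulVec, dotProduct_sub] at hdiff
  exact Real.sqrt_le_sqrt (sub_nonneg.1 hdiff)

theorem jac_mulVec (f : (Fin n → ℝ) → (Fin n → ℝ)) (z u : Fin n → ℝ) :
    jac f z *ᵥ u = fderiv ℝ f z u :=
  LinearMap.toMatrix'_mulVec _ u

theorem dotProduct_mulVec_mulVec_le_of_loewnerLE {A : Matrix (Fin n) (Fin n) ℝ} {β : ℝ}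
    (hM : M.IsSymm) (hA : loewnerLE (Aᵀ * M + M * A) ((-(2 * β)) • M)) (u : Fin n → ℝ) :
    u ⬝ᵥ M *ᵥ (A *ᵥ u) ≤ -β * (u ⬝ᵥ M *ᵥ u) := by
  have htranspose : u ⬝ᵥ Aᵀ *ᵥ (M *ᵥ u) = u ⬝ᵥ M *ᵥ (A *ᵥ u) := by
    rw [mulVec_transpose, dotProduct_comm, ← dotProduct_mulVec, dotProduct_mulVec u M,
      ← mulVec_transpose, hM.eq]
  have hdiff := hA.dotProduct_mulVec_nonneg u
  simp only [star_trivial, sub_mulVec, add_mulVec, smul_mulVec, ← mulVec_mulVec, dotProduct_sub,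
    dotProduct_add, dotProduct_smul, smul_eq_mul, htranspose] at hdiff
  linarith

theorem continuousBilin_sub_image_sub_le_of_loewnerLE {f : (Fin n → ℝ) → (Fin n → ℝ)} {β : ℝ}
    {a b : Fin n → ℝ} (hM : M.IsSymm) (hf : ∀ z ∈ segment ℝ a b, DifferentiableAt ℝ f z)
    (hcontract : ∀ z ∈ segment ℝ a b,
      loewnerLE ((jac f z)ᵀ * M + M * jac f z) ((-(2 * β)) • M)) :
    continuousBilin M (a - b) (f a - f b) ≤ -β * continuousBilin M (a - b) (a - b) :=
  strongDual_image_sub_le_of_fderiv_le _ (fun z hz => (hf z hz).hasFDerivAt.hasFDerivWithinAt)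
    fun z hz => by
      simpa only [continuousBilin_apply, jac_mulVec] using
        dotProduct_mulVec_mulVec_le_of_loewnerLE hM (hcontract z hz) (a - b)

end MatrixForm

theorem stmt9_general {n : ℕ} {f : (Fin n → ℝ) → (Fin n → ℝ)} (hf : Differentiable ℝ f)
    {M : Matrix (Fin n) (Fin n) ℝ} (hM : M.PosSemidef) {β ρmax : ℝ} (hβ : 0 < β)
    {ω x xbar : ℝ → Fin n → ℝ}
    (hω : ∀ t, 0 ≤ t → mnorm M (ω t) ≤ ρmax)
    (hx : ∀ t, 0 ≤ t → HasDerivWithinAt x (f (x t) + ω t) (Set.Ici 0) t)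
    (hxbar : ∀ t, 0 ≤ t → HasDerivWithinAt xbar (f (xbar t)) (Set.Ici 0) t)
    (hinit : x 0 = xbar 0)
    (hcontract : ∀ t, 0 ≤ t → ∀ v ∈ segment ℝ (x t) (xbar t),
      loewnerLE ((jac f v)ᵀ * M + M * jac f v) ((-(2 * β)) • M))
    {t : ℝ} (ht : 0 ≤ t) : mnorm M (x t - xbar t) ≤ ρmax / β := by
  have hρ : 0 ≤ ρmax := (Real.sqrt_nonneg _).trans (hω 0 le_rfl)
  have hderiv : ∀ s, 0 ≤ s →
      HasDerivWithinAt (x - xbar) (f (x s) - f (xbar s) + ω s) (Set.Ici 0) s := fun s hs => by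
    simpa only [add_sub_right_comm] using (hx s hs).sub (hxbar s hs)
  have hdissip : ∀ s, 0 ≤ s → continuousBilin M (x s - xbar s) (f (x s) - f (xbar s)) ≤
      -β * continuousBilin M (x s - xbar s) (x s - xbar s) := fun s hs =>
    continuousBilin_sub_image_sub_le_of_loewnerLE (isHermitian_iff_isSymm.1 hM.isHermitian)
      (fun z _ => hf z) (hcontract s hs)
  have hdist : ∀ s, 0 ≤ s → continuousBilin M (ω s) (ω s) ≤ ρmax ^ 2 := fun s hs => by
    rw [← sq_mnorm hM]
    exact pow_le_pow_left₀ (Real.sqrt_nonneg _) (hω s hs) 2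
  refine le_of_sq_le_sq ?_ (by positivity)
  calc mnorm M (x t - xbar t) ^ 2
      = continuousBilin M ((x - xbar) t) ((x - xbar) t) := sq_mnorm hM _
    _ ≤ gronwallBound (continuousBilin M ((x - xbar) 0) ((x - xbar) 0)) (-β) (ρmax ^ 2 / β) t :=
      apply_self_le_gronwallBound_of_dissipative (isPosSemidef_continuousBilin hM) hβ
        hderiv hdissip hdist ht
    _ = gronwallBound 0 (-β) (ρmax ^ 2 / β) t := by simp [hinit]
    _ ≤ ρmax ^ 2 / β / β := gronwallBound_zero_neg_le hβ (by positivity) t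
    _ = (ρmax / β) ^ 2 := by ring

theorem stmt9 {n : ℕ} (f : (Fin n → ℝ) → (Fin n → ℝ)) (hf : ContDiff ℝ 1 f)
    (M : Matrix (Fin n) (Fin n) ℝ) (hMsymm : M.IsSymm) (hMpd : M.PosDef)
    (hMle : loewnerLE M (1 : Matrix (Fin n) (Fin n) ℝ))
    (β ℓ ρmax : ℝ) (hβ : 0 < β) (hℓ : 0 < ℓ) (hρ : 0 ≤ ρmax)
    (ω : ℝ → Fin n → ℝ)
    (hω : ∀ t : ℝ, 0 ≤ t → Real.sqrt (ω t ⬝ᵥ ω t) ≤ ρmax)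
    (x xbar : ℝ → Fin n → ℝ)
    (hx : ∀ t : ℝ, 0 ≤ t → HasDerivAt x (f (x t) + ω t) t)
    (hxbar : ∀ t : ℝ, 0 ≤ t → HasDerivAt xbar (f (xbar t)) t)
    (hinit : x 0 = xbar 0)
    (htube : ∀ t : ℝ, 0 ≤ t → mnorm M (x t - xbar t) ≤ ℓ)
    (hcontract : ∀ t : ℝ, 0 ≤ t → ∀ v ∈ segment ℝ (x t) (xbar t),
      loewnerLE ((jac f v)ᵀ * M + M * jac f v) ((-(2 * β)) • M)) :
    ∀ t : ℝ, 0 ≤ t →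
      (mnorm M (x t - xbar t)) ^ 2 ≤ 2 * ℓ * ρmax / β := by
  intro t ht
  have hdev : mnorm M (x t - xbar t) ≤ ρmax / β :=
    stmt9_general (hf.differentiable one_ne_zero) hMpd.posSemidef hβ
      (fun s hs => (mnorm_le_sqrt_dotProduct_self hMle _).trans (hω s hs))
      (fun s hs => (hx s hs).hasDerivWithinAt) (fun s hs => (hxbar s hs).hasDerivWithinAt)
      hinit hcontract ht
  calc mnorm M (x t - xbar t) ^ 2
      = mnorm M (x t - xbar t) * mnorm M (x t - xbar t) := sq _
    _ ≤ ℓ * (ρmax / β) := mul_le_mul (htube t ht) hdev (Real.sqrt_nonneg _) hℓ.le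
    _ ≤ 2 * (ℓ * (ρmax / β)) := le_mul_of_one_le_left (by positivity) one_le_two
    _ = 2 * ℓ * ρmax / β := by ring
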